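/- In every Euclidean deliberation space (M = X = ℝ^d with the Euclidean metric, d ≥ 1, V ⊆ ℝ^d finite), the following holds: if a deliberative coalition structure D contains at least three nonempty coalitions whose supported proposals are different from r and D is not successful, then there exists a compromise transition from D. Consequently, any deliberation consisting of compromise transitions whose terminal coalition structure has at least three nonempty coalitions not supporting r is successful. -/

import Mathlib

/-!
Write `x = v - r`. If `v` approves `p` then `⟪x, p - r⟫ > 0`, and conversely, if `⟪x, u⟫ > 0` then
`v` approves `r + t • u` for all small `t > 0`. As there are finitely many agents, approval regions
may therefore be replaced by open half-spaces through `r` (`exists_approves_of_inner_pos`).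

Take three nonempty coalitions `A`, `B`, `C` not supporting `r`, with `A` of maximum size. The set of
proposals approved by all of `A` is open and nonempty, so it contains a `p` for which no agent of
`V` other than `r` lies on the hyperplane through `r` orthogonal to `u = p - r`
(`exists_generic_proposal`). If the half-space of `u` contains an agent of `B`, or one of `C`, then
that agent together with all of `A` outnumbers both coalitions, and there is a compromise between
them. Otherwise all agents of `B` and `C` lie in the open half-space of `-u`, and `B` and `C` merge
entirely.
-/

/-!
Formalization of deliberative coalition formation (Elkind et al., "United for Change:
Deliberative Coalition Formation to Change the Status Quo").

Agents and proposals live in a metric space `M`; `V` is the finite set of agents,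
`X ⊆ M` the set of proposals, `r ∈ X` the status quo.  A deliberative coalition
structure is a multiset of deliberative coalitions whose agent sets partition `V`
(empty coalitions are allowed).
-/

open scoped Classical
noncomputable section

variable {M : Type*}

/-- Agent `v` approves proposal `p` relative to status quo `r`
if `v` is strictly closer to `p` than to `r`. -/
def Approves [MetricSpace M] (r v p : M) : Prop := dist v p < dist v r

/-- The set `C^p` of agents in `C` that approve proposal `p`. -/
def approvers [MetricSpace M] (r : M) (C : Finset M) (p : M) : Finset M :=
  C.filter fun v => Approves r v p

/-- `(C, p)` is a deliberative coalition: `C ⊆ V`, `p ∈ X`, and either `p = r` and no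
agent of `C` approves any proposal in `X \ {r}`, or `p ≠ r` and every agent of `C`
approves `p`. -/
def IsCoalition [MetricSpace M] (V : Finset M) (X : Set M) (r : M)
    (C : Finset M) (p : M) : Prop :=
  C ⊆ V ∧ p ∈ X ∧
    ((p = r ∧ ∀ v ∈ C, ∀ x ∈ X, x ≠ r → ¬ Approves r v x) ∨
     (p ≠ r ∧ ∀ v ∈ C, Approves r v p))

/-- `D` is a deliberative coalition structure: a (finite) multiset of deliberative
coalitions whose agent sets are pairwise disjoint with union `V` (equivalently, the
multiset sum of the agent sets is exactly `V`). Empty coalitions are allowed. -/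
def IsStructure [MetricSpace M] (V : Finset M) (X : Set M) (r : M)
    (D : Multiset (Finset M × M)) : Prop :=
  (∀ c ∈ D, IsCoalition V X r c.1 c.2) ∧
    (D.map fun c => c.1.val).sum = V.val

/-- Compromise transition: the approvers of a proposal `p ∈ X` within two coalitions
`(C₁, p₁)` and `(C₂, p₂)` form a new coalition `(C₁^p ∪ C₂^p, p)` whose size exceeds
both `|C₁|` and `|C₂|`, leaving the dissenters `(C₁ \ C₁^p, p₁)` and `(C₂ \ C₂^p, p₂)`
behind. -/
def CompromiseTransition [MetricSpace M] (V : Finset M) (X : Set M) (r : M)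
    (D D' : Multiset (Finset M × M)) : Prop :=
  IsStructure V X r D ∧ IsStructure V X r D' ∧
  ∃ (C₁ C₂ : Finset M) (p₁ p₂ p : M) (D₀ : Multiset (Finset M × M)),
    p ∈ X ∧
    C₁.card < (approvers r C₁ p ∪ approvers r C₂ p).card ∧
    C₂.card < (approvers r C₁ p ∪ approvers r C₂ p).card ∧
    D = (C₁, p₁) ::ₘ (C₂, p₂) ::ₘ D₀ ∧
    D' = (approvers r C₁ p ∪ approvers r C₂ p, p) ::ₘ
         (C₁ \ approvers r C₁ p, p₁) ::ₘ (C₂ \ approvers r C₂ p, p₂) ::ₘ D₀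

/-- The maximum support `m*`: the largest number of agents approving a single proposal
in `X \ {r}`. -/
def maxSupport [MetricSpace M] (V : Finset M) (X : Set M) (r : M) : ℕ :=
  sSup ((fun p => (approvers r V p).card) '' (X \ {r}))

/-- A coalition structure is successful if it contains a deliberative coalition
`(C, p)` with `p ≠ r` and `|C| = m*`. -/
def Successful [MetricSpace M] (V : Finset M) (X : Set M) (r : M)
    (D : Multiset (Finset M × M)) : Prop :=
  ∃ c ∈ D, c.2 ≠ r ∧ c.1.card = maxSupport V X r

section Combinatorics

variable {E : Type*} [MetricSpace E]

lemma disjoint_of_isStructure {V : Finset E} {r : E} {a b : Finset E × E}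
    {D₀ : Multiset (Finset E × E)} (hD : IsStructure V Set.univ r (a ::ₘ b ::ₘ D₀)) :
    Disjoint a.1 b.1 := by
  have h := hD.2
  simp only [Multiset.map_cons, Multiset.sum_cons] at h
  have hnd := V.nodup
  rw [← h, ← add_assoc] at hnd
  exact Finset.disjoint_val.1 (Multiset.nodup_add.1 (Multiset.nodup_add.1 hnd).1).2.2

lemma IsCoalition.mono {V : Finset E} {r p : E} {A B : Finset E}
    (h : IsCoalition V Set.univ r A p) (hBA : B ⊆ A) : IsCoalition V Set.univ r B p := by
  obtain ⟨h1, h2, h3⟩ := h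
  refine ⟨hBA.trans h1, h2, ?_⟩
  rcases h3 with ⟨h4, h5⟩ | ⟨h4, h5⟩
  · exact Or.inl ⟨h4, fun v hv => h5 v (hBA hv)⟩
  · exact Or.inr ⟨h4, fun v hv => h5 v (hBA hv)⟩

/-- The two size conditions alone make the compromise admissible: they force `q ≠ r`, and the
resulting collection is again a coalition structure. -/
lemma exists_transition {V : Finset E} {r : E} {a b : Finset E × E}
    {D₀ : Multiset (Finset E × E)} (hD : IsStructure V Set.univ r (a ::ₘ b ::ₘ D₀)) (q : E)
    (ha : a.1.card < (approvers r a.1 q ∪ approvers r b.1 q).card)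
    (hb : b.1.card < (approvers r a.1 q ∪ approvers r b.1 q).card) :
    ∃ D', CompromiseTransition V Set.univ r (a ::ₘ b ::ₘ D₀) D' := by
  have hdisj := disjoint_of_isStructure hD
  have hsa : approvers r a.1 q ⊆ a.1 := Finset.filter_subset _ _
  have hsb : approvers r b.1 q ⊆ b.1 := Finset.filter_subset _ _
  have hca : IsCoalition V Set.univ r a.1 a.2 := hD.1 a (by simp)
  have hcb : IsCoalition V Set.univ r b.1 b.2 := hD.1 b (by simp)
  have happ : ∀ v ∈ approvers r a.1 q ∪ approvers r b.1 q, Approves r v q := by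
    intro v hv
    rcases Finset.mem_union.1 hv with hv | hv
    · exact (Finset.mem_filter.1 hv).2
    · exact (Finset.mem_filter.1 hv).2
  have hq : q ≠ r := by
    rintro rfl
    obtain ⟨v, hv⟩ := Finset.card_pos.1 (lt_of_le_of_lt (Nat.zero_le _) ha)
    exact lt_irrefl _ (happ v hv)
  refine ⟨_, hD, ⟨?_, ?_⟩, a.1, b.1, a.2, b.2, q, D₀, Set.mem_univ _, ha, hb, rfl, rfl⟩
  · intro c hc
    simp only [Multiset.mem_cons] at hc
    rcases hc with rfl | rfl | rfl | hc
    · exact ⟨Finset.union_subset (hsa.trans hca.1) (hsb.trans hcb.1), Set.mem_univ _,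
        Or.inr ⟨hq, happ⟩⟩
    · exact hca.mono Finset.sdiff_subset
    · exact hcb.mono Finset.sdiff_subset
    · exact hD.1 c (by simp [hc])
  · rw [← hD.2]
    simp only [Multiset.map_cons, Multiset.sum_cons]
    have hu : (approvers r a.1 q ∪ approvers r b.1 q).val =
        (approvers r a.1 q).val + (approvers r b.1 q).val := by
      rw [← Finset.disjUnion_eq_union _ _ (hdisj.mono hsa hsb)]; rfl
    have h1 : (approvers r a.1 q).val + (a.1 \ approvers r a.1 q).val = a.1.val := by
      rw [Finset.sdiff_val]; exact add_tsub_cancel_of_le (Finset.val_le_iff.2 hsa)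
    have h2 : (approvers r b.1 q).val + (b.1 \ approvers r b.1 q).val = b.1.val := by
      rw [Finset.sdiff_val]; exact add_tsub_cancel_of_le (Finset.val_le_iff.2 hsb)
    rw [hu, ← h1, ← h2]
    abel

/-- If one proposal is approved by all of a coalition and by some agent of another coalition that
is not larger, then the two coalitions admit a compromise. -/
lemma exists_transition_of_approves {V : Finset E} {r : E} {a b : Finset E × E}
    {D₀ : Multiset (Finset E × E)} (hD : IsStructure V Set.univ r (a ::ₘ b ::ₘ D₀)) (q : E)
    (hba : b.1.card ≤ a.1.card) (hq : ∀ v ∈ a.1, Approves r v q)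
    (hb : ∃ v ∈ b.1, Approves r v q) :
    ∃ D', CompromiseTransition V Set.univ r (a ::ₘ b ::ₘ D₀) D' := by
  obtain ⟨w, hw, hwq⟩ := hb
  have hdisj := disjoint_of_isStructure hD
  have hlt : a.1.card < (approvers r a.1 q ∪ approvers r b.1 q).card := by
    refine Finset.card_lt_card (Finset.ssubset_iff_subset_ne.2 ⟨fun v hv => ?_, fun h => ?_⟩)
    · exact Finset.mem_union_left _ (Finset.mem_filter.2 ⟨hv, hq v hv⟩)
    · have hwa : w ∈ a.1 := by
        rw [h]; exact Finset.mem_union_right _ (Finset.mem_filter.2 ⟨hw, hwq⟩)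
      exact Finset.disjoint_left.1 hdisj hwa hw
  exact exists_transition hD q hlt (hba.trans_lt hlt)

end Combinatorics

section Geometry

open scoped RealInnerProductSpace Topology

variable {E : Type*} [NormedAddCommGroup E] [InnerProductSpace ℝ E]

lemma inner_pos_of_approves {r v p : E} (h : Approves r v p) : 0 < ⟪v - r, p - r⟫ := by
  unfold Approves at h
  rw [dist_eq_norm, dist_eq_norm, ← sub_sub_sub_cancel_right v p r] at h
  have h2 := pow_lt_pow_left₀ h (norm_nonneg _) two_ne_zero
  rw [norm_sub_sq_real] at h2
  nlinarith [sq_nonneg ‖p - r‖]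

/-- All agents of a finite set in the open half-space of `u` through `r` approve a common proposal,
namely `r + t • u` for small `t > 0`. -/
lemma exists_approves_of_inner_pos (V : Finset E) (r u : E) :
    ∃ q, ∀ v ∈ V, 0 < ⟪v - r, u⟫ → Approves r v q := by
  have key : ∀ v ∈ V, ∀ᶠ t : ℝ in 𝓝[>] 0, 0 < ⟪v - r, u⟫ → Approves r v (r + t • u) := by
    intro v _
    by_cases hv : 0 < ⟪v - r, u⟫
    · have hlim : ∀ᶠ t : ℝ in 𝓝 0, t * ‖u‖ ^ 2 < 2 * ⟪v - r, u⟫ := by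
        have hc : Continuous fun t : ℝ => t * ‖u‖ ^ 2 := by fun_prop
        exact hc.continuousAt.eventually_lt continuousAt_const (by simpa using hv)
      filter_upwards [nhdsWithin_le_nhds hlim, self_mem_nhdsWithin] with t ht ht0 _
      have ht0 : 0 < t := ht0
      unfold Approves
      rw [dist_eq_norm, dist_eq_norm, ← sub_sub]
      refine lt_of_pow_lt_pow_left₀ 2 (norm_nonneg _) ?_
      rw [norm_sub_sq_real, inner_smul_right, norm_smul, mul_pow, Real.norm_eq_abs, sq_abs]
      nlinarith [mul_lt_mul_of_pos_left ht ht0]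
    · exact Filter.Eventually.of_forall fun t h => absurd h hv
  obtain ⟨t, ht⟩ := ((Filter.eventually_all_finset V).2 key).exists
  exact ⟨r + t • u, ht⟩

/-- The hyperplanes through `r` orthogonal to the vectors `v - r` are finitely many closed nowhere
dense sets, so a proposal approved by all of `A` can be moved off them. -/
lemma exists_generic_proposal [CompleteSpace E] (V A : Finset E) (r p₀ : E)
    (hA : ∀ v ∈ A, Approves r v p₀) :
    ∃ p, (∀ v ∈ A, Approves r v p) ∧ ∀ v ∈ V, v ≠ r → ⟪v - r, p - r⟫ ≠ 0 := by
  have hopen : IsOpen {p : E | ∀ v ∈ A, Approves r v p} := by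
    have : {p : E | ∀ v ∈ A, Approves r v p} = ⋂ v ∈ A, {p | dist v p < dist v r} := by
      ext p; simp [Approves]
    rw [this]
    exact isOpen_biInter_finset fun v _ => isOpen_lt (by fun_prop) (by fun_prop)
  have hdense : Dense (⋂ v ∈ ((V.erase r : Finset E) : Set E), {p : E | ⟪v - r, p - r⟫ ≠ 0}) := by
    refine dense_biInter_of_isOpen (fun v _ => ?_) (Finset.countable_toSet _) (fun v hv => ?_)
    · exact isOpen_ne_fun (by fun_prop) (by fun_prop)
    · have hvr : v - r ≠ 0 := sub_ne_zero.2 (Finset.ne_of_mem_erase (Finset.mem_coe.1 hv))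
      intro p
      rw [mem_closure_iff_frequently]
      -- The points `p + t • (v - r)`, for small `t ≠ 0`, are off the hyperplane and tend to `p`.
      have htend : Filter.Tendsto (fun t : ℝ => p + t • (v - r)) (𝓝[≠] 0) (𝓝 p) := by
        have hc : Continuous fun t : ℝ => p + t • (v - r) := by fun_prop
        simpa using (hc.tendsto 0).mono_left nhdsWithin_le_nhds
      refine htend.frequently (Filter.Eventually.frequently ?_)
      have hx : ⟪v - r, v - r⟫ ≠ 0 := inner_self_ne_zero.2 hvr
      by_cases hp : ⟪v - r, p - r⟫ = 0
      · filter_upwards [self_mem_nhdsWithin] with t ht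
        have ht : t ≠ 0 := ht
        show ⟪v - r, p + t • (v - r) - r⟫ ≠ 0
        rw [add_sub_right_comm, inner_add_right, hp, inner_smul_right, zero_add]
        exact mul_ne_zero ht hx
      · exact htend.eventually ((isOpen_ne_fun (by fun_prop) (by fun_prop)).mem_nhds hp)
  obtain ⟨p, hp, hpA⟩ := hdense.exists_mem_open hopen ⟨p₀, hA⟩
  refine ⟨p, hpA, fun v hv hvr => ?_⟩
  simp only [Set.mem_iInter] at hp
  exact hp v (Finset.mem_coe.2 (Finset.mem_erase.2 ⟨hvr, hv⟩))

lemma exists_transition_of_max [CompleteSpace E] {V : Finset E} {r : E} {a b c : Finset E × E}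
    {D₀ : Multiset (Finset E × E)} (hD : IsStructure V Set.univ r (a ::ₘ b ::ₘ c ::ₘ D₀))
    (hba : b.1.card ≤ a.1.card) (hca : c.1.card ≤ a.1.card)
    (hb : b.1.Nonempty) (hc : c.1.Nonempty)
    (har : a.2 ≠ r) (hbr : b.2 ≠ r) (hcr : c.2 ≠ r) :
    ∃ D', CompromiseTransition V Set.univ r (a ::ₘ b ::ₘ c ::ₘ D₀) D' := by
  have coal : ∀ x ∈ a ::ₘ b ::ₘ c ::ₘ D₀, x.2 ≠ r → ∀ v ∈ x.1, v ∈ V ∧ Approves r v x.2 := by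
    intro x hx hxr v hv
    obtain ⟨h1, -, h2⟩ := hD.1 x hx
    exact ⟨h1 hv, (h2.resolve_left fun h => hxr h.1).2 v hv⟩
  have hA := coal a (by simp) har
  have hB := coal b (by simp) hbr
  have hC := coal c (by simp) hcr
  have ne_r : ∀ {v p : E}, Approves r v p → v ≠ r := by
    rintro v p h rfl
    exact absurd h (by simp [Approves])
  obtain ⟨p, hpA, hpV⟩ := exists_generic_proposal V a.1 r a.2 fun v hv => (hA v hv).2
  have hswapAC : a ::ₘ b ::ₘ c ::ₘ D₀ = a ::ₘ c ::ₘ b ::ₘ D₀ := by rw [Multiset.cons_swap b c]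
  have hswapBC : a ::ₘ b ::ₘ c ::ₘ D₀ = b ::ₘ c ::ₘ a ::ₘ D₀ := by
    rw [Multiset.cons_swap a b, Multiset.cons_swap a c]
  obtain ⟨q, hq⟩ := exists_approves_of_inner_pos V r (p - r)
  have hqA : ∀ v ∈ a.1, Approves r v q := fun v hv =>
    hq v (hA v hv).1 (inner_pos_of_approves (hpA v hv))
  by_cases h1 : ∃ v ∈ b.1, 0 < ⟪v - r, p - r⟫
  · obtain ⟨v, hv, hv'⟩ := h1
    exact exists_transition_of_approves hD q hba hqA ⟨v, hv, hq v (hB v hv).1 hv'⟩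
  by_cases h2 : ∃ v ∈ c.1, 0 < ⟪v - r, p - r⟫
  · obtain ⟨v, hv, hv'⟩ := h2
    rw [hswapAC] at hD ⊢
    exact exists_transition_of_approves hD q hca hqA ⟨v, hv, hq v (hC v hv).1 hv'⟩
  push Not at h1 h2
  obtain ⟨q', hq'⟩ := exists_approves_of_inner_pos V r (-(p - r))
  have hneg : ∀ v ∈ V, v ≠ r → ⟪v - r, p - r⟫ ≤ 0 → Approves r v q' := by
    intro v hv hvr hle
    apply hq' v hv
    rw [inner_neg_right]
    exact neg_pos.2 (lt_of_le_of_ne hle (hpV v hv hvr))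
  have hqB : ∀ v ∈ b.1, Approves r v q' := fun v hv =>
    hneg v (hB v hv).1 (ne_r (hB v hv).2) (h1 v hv)
  have hqC : ∀ v ∈ c.1, Approves r v q' := fun v hv =>
    hneg v (hC v hv).1 (ne_r (hC v hv).2) (h2 v hv)
  rw [hswapBC] at hD ⊢
  have hcard : (approvers r b.1 q' ∪ approvers r c.1 q').card = b.1.card + c.1.card := by
    have e1 : approvers r b.1 q' = b.1 := Finset.filter_true_of_mem hqB
    have e2 : approvers r c.1 q' = c.1 := Finset.filter_true_of_mem hqC
    rw [e1, e2, Finset.card_union_of_disjoint (disjoint_of_isStructure hD)]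
  have hb' := hb.card_pos
  have hc' := hc.card_pos
  exact exists_transition hD q' (by omega) (by omega)

end Geometry

/-- In every Euclidean deliberation space (`M = X = ℝ^d`, `d ≥ 1`,
with the Euclidean metric and `V ⊆ ℝ^d` finite): if a deliberative coalition structure
`D` contains at least three nonempty coalitions whose supported proposals differ from
`r` and `D` is not successful, then there is a compromise transition from `D`.
Consequently, a deliberation of compromise transitions whose terminal structure has at
least three nonempty coalitions not supporting `r` is successful. -/
theorem compromise_from_three_nonstatusquo_coalitions_euclidean
    (d : ℕ) (hd : 1 ≤ d)
    (V : Finset (EuclideanSpace ℝ (Fin d))) (r : EuclideanSpace ℝ (Fin d))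
    (D : Multiset (Finset (EuclideanSpace ℝ (Fin d)) × EuclideanSpace ℝ (Fin d)))
    (hD : IsStructure V Set.univ r D)
    (hthree : 3 ≤ Multiset.card (D.filter fun c => c.1.Nonempty ∧ c.2 ≠ r))
    (hns : ¬ Successful V Set.univ r D) :
    ∃ D', CompromiseTransition V Set.univ r D D' := by
  obtain ⟨S, hS'⟩ := Multiset.card_pos_iff_exists_mem.1
    ((Nat.choose_pos hthree).trans_eq (Multiset.card_powersetCard 3 _).symm)
  obtain ⟨hS, hS3⟩ := Multiset.mem_powersetCard.1 hS'
  obtain ⟨a, b, c, rfl⟩ := Multiset.card_eq_three.1 hS3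
  have hmem : ∀ x ∈ ({a, b, c} : Multiset _), x.1.Nonempty ∧ x.2 ≠ r := fun x hx =>
    (Multiset.mem_filter.1 (Multiset.mem_of_le hS hx)).2
  obtain ⟨ha, har⟩ := hmem a (by simp)
  obtain ⟨hb, hbr⟩ := hmem b (by simp)
  obtain ⟨hc, hcr⟩ := hmem c (by simp)
  obtain ⟨D₀, hD₀⟩ := Multiset.le_iff_exists_add.1 (hS.trans (Multiset.filter_le _ _))
  have h1 : D = a ::ₘ b ::ₘ c ::ₘ D₀ := by
    rw [hD₀]
    simp only [Multiset.insert_eq_cons, Multiset.cons_add, Multiset.singleton_add]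
  have h2 : D = b ::ₘ a ::ₘ c ::ₘ D₀ := by rw [h1, Multiset.cons_swap]
  have h3 : D = c ::ₘ a ::ₘ b ::ₘ D₀ := by
    rw [h1, Multiset.cons_swap b c, Multiset.cons_swap a c]
  -- Name the coalitions so that the first one has maximum size.
  rcases le_total b.1.card a.1.card with hba | hab
  · rcases le_total c.1.card a.1.card with hca | hac
    · rw [h1] at hD ⊢
      exact exists_transition_of_max hD hba hca hb hc har hbr hcr
    · rw [h3] at hD ⊢
      exact exists_transition_of_max hD hac (hba.trans hac) ha hb hcr har hbr
  · rcases le_total c.1.card b.1.card with hcb | hbc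
    · rw [h2] at hD ⊢
      exact exists_transition_of_max hD hab hcb ha hc hbr har hcr
    · rw [h3] at hD ⊢
      exact exists_transition_of_max hD (hab.trans hbc) hbc ha hb hcr har hbr
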